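/- Let Σ be a signed graph and v a vertex of Σ. There is a negative circle of Σ containing v if and only if v belongs to an unbalanced block of Σ. -/

import Mathlib

/-!
A circle is inseparable, and inseparable sets that pairwise share two vertices have an inseparable
union; so the union of all inseparable sets containing a given negative circle is a block.

Conversely, inside an inseparable set `S` the property of lying on a negative circle passes from a
vertex `u` to each neighbour `v`. If the negative circle `C` through `u` misses `v`, then a path
from `v` to `C` avoiding `u`, preceded by the edge `uv`, is an ear of `C`. The ear forms a theta
graph with `C`; the signs of the three circles of a theta graph multiply to `1`, so one of the two
circles through the ear is negative as well. As `S` is connected, one negative circle in `S` thus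
yields a negative circle through every vertex of `S`.
-/

/-- The sign of a walk in a signed graph: the product of the signs of its edges. -/
def walkSign {V : Type*} (G : SimpleGraph V) (σ : Sym2 V → ℤˣ) {u v : V}
    (w : G.Walk u v) : ℤˣ :=
  (w.edges.map σ).prod

/-- A set of vertices induces an inseparable subgraph: the induced subgraph is connected
and remains connected after deleting any one of its vertices (no cutpoint). -/
def inseparableOn {V : Type*} (G : SimpleGraph V) (S : Set V) : Prop :=
  (G.induce S).Connected ∧ ∀ v ∈ S, (G.induce (S \ {v})).Connected

/-- `S` is (the vertex set of) a block of `G`: a maximal inseparable subgraph. -/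
def isBlock {V : Type*} (G : SimpleGraph V) (S : Set V) : Prop :=
  inseparableOn G S ∧ ∀ T : Set V, S ⊆ T → inseparableOn G T → T = S

/-- The signed graph restricted to `S` (e.g. a block) is balanced: every circle lying
within `S` is positive. -/
def balancedOn {V : Type*} (G : SimpleGraph V) (σ : Sym2 V → ℤˣ) (S : Set V) : Prop :=
  ∀ ⦃a : V⦄ (w : G.Walk a a), w.IsCycle → (∀ x ∈ w.support, x ∈ S) →
    walkSign G σ w = 1

section SignedGraph

open SimpleGraph

variable {V : Type*} {G : SimpleGraph V} {σ : Sym2 V → ℤˣ} {S : Set V} {u v z : V}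

section WalkSign

theorem walkSign_append (p : G.Walk u v) (q : G.Walk v z) :
    walkSign G σ (p.append q) = walkSign G σ p * walkSign G σ q := by
  simp [walkSign]

theorem walkSign_reverse (p : G.Walk u v) : walkSign G σ p.reverse = walkSign G σ p := by
  simp [walkSign]

theorem walkSign_rotate [DecidableEq V] (w : G.Walk u u) (hv : v ∈ w.support) :
    walkSign G σ (w.rotate v hv) = walkSign G σ w :=
  ((w.rotate_edges v hv).perm.map σ).prod_eq

theorem walkSign_append_eq_neg_one_or {p : G.Walk u z} {q : G.Walk z u}
    (hpq : walkSign G σ (p.append q) = -1) (e : G.Walk u z) :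
    walkSign G σ (e.append q) = -1 ∨ walkSign G σ (e.append p.reverse) = -1 := by
  have theta_product :
      walkSign G σ (e.append q) * walkSign G σ (e.append p.reverse) = -1 := calc
    _ = walkSign G σ e * walkSign G σ e * (walkSign G σ p * walkSign G σ q) := by
      rw [walkSign_append, walkSign_append, walkSign_reverse]
      ac_rfl
    _ = -1 := by rw [Int.units_mul_self, one_mul, ← walkSign_append, hpq]
  refine (Int.units_eq_one_or (walkSign G σ (e.append q))).symm.imp_right fun hq ↦ ?_
  rwa [hq, one_mul] at theta_product

end WalkSign

section Inseparable

theorem inseparableOn.connected_induce_diff_singleton (hS : inseparableOn G S) (v : V) :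
    (G.induce (S \ {v})).Connected := by
  by_cases hv : v ∈ S
  · exact hS.2 v hv
  · rw [Set.sdiff_singleton_eq_self hv]
    exact hS.1

theorem inseparableOn.nontrivial (hS : inseparableOn G S) : S.Nontrivial := by
  obtain ⟨v, hv⟩ := hS.1.nonempty
  obtain ⟨w, hw, hwv⟩ := (hS.2 v hv).nonempty
  exact ⟨w, hw, v, hv, hwv⟩

theorem inseparableOn_sUnion {𝒮 : Set (Set V)} (hne : 𝒮.Nonempty)
    (hinter : ∀ ⦃S⦄, S ∈ 𝒮 → ∀ ⦃T⦄, T ∈ 𝒮 → (S ∩ T).Nontrivial)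
    (hinsep : ∀ S ∈ 𝒮, inseparableOn G S) : inseparableOn G (⋃₀ 𝒮) := by
  refine ⟨induce_sUnion_connected_of_pairwise_not_disjoint hne
    (fun hS hT ↦ (hinter hS hT).nonempty) fun hS ↦ (hinsep _ hS).1, fun v _ ↦ ?_⟩
  have hdiff : ⋃₀ 𝒮 \ {v} = ⋃₀ ((· \ {v}) '' 𝒮) := by
    rw [Set.sUnion_image, Set.sUnion_eq_biUnion]
    simp only [Set.iUnion_sdiff]
  rw [hdiff]
  refine induce_sUnion_connected_of_pairwise_not_disjoint (hne.image _) ?_ ?_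
  · rintro _ _ ⟨S, hS, rfl⟩ ⟨T, hT, rfl⟩
    obtain ⟨x, ⟨hxS, hxT⟩, hxv⟩ := (hinter hS hT).exists_ne v
    exact ⟨x, ⟨hxS, hxv⟩, hxT, hxv⟩
  · rintro _ ⟨S, hS, rfl⟩
    exact (hinsep S hS).connected_induce_diff_singleton v

theorem inseparableOn.exists_isBlock_superset (hS : inseparableOn G S) :
    ∃ B, isBlock G B ∧ S ⊆ B := by
  let 𝒮 : Set (Set V) := {T | S ⊆ T ∧ inseparableOn G T}
  have hS_mem : S ∈ 𝒮 := ⟨subset_rfl, hS⟩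
  have hunion : inseparableOn G (⋃₀ 𝒮) :=
    inseparableOn_sUnion ⟨S, hS_mem⟩
      (fun _ hT _ hT' ↦ hS.nontrivial.mono (Set.subset_inter hT.1 hT'.1)) fun _ hT ↦ hT.2
  have hsub : S ⊆ ⋃₀ 𝒮 := Set.subset_sUnion_of_mem hS_mem
  exact ⟨⋃₀ 𝒮, ⟨hunion, fun T hT hinsep ↦
    (Set.subset_sUnion_of_mem (show T ∈ 𝒮 from ⟨hsub.trans hT, hinsep⟩)).antisymm hT⟩, hsub⟩

theorem support_diff_singleton_of_isCycle {c : G.Walk u u} (hc : c.IsCycle) :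
    {x | x ∈ c.support} \ {u} = {x | x ∈ c.tail.dropLast.support} := by
  have htail : ¬ c.tail.Nil := by
    have := hc.three_le_length
    rw [Walk.not_nil_iff_lt_length, c.length_tail]
    lia
  have hsupport : c.support = u :: (c.tail.dropLast.support ++ [u]) := by
    rw [Walk.support_dropLast_concat htail, Walk.cons_support_tail hc.not_nil]
  have hu : u ∉ c.tail.dropLast.support := by
    have hnodup := hc.support_nodup
    rw [hsupport, List.tail_cons, List.nodup_append'] at hnodup
    exact fun h ↦ hnodup.2.2 h (List.mem_singleton_self u)
  ext x
  rw [hsupport]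
  grind

theorem inseparableOn_support_of_isCycle {c : G.Walk u u} (hc : c.IsCycle) :
    inseparableOn G {x | x ∈ c.support} := by
  classical
  refine ⟨c.connected_induce_support, fun v hv ↦ ?_⟩
  have hrotate : {x | x ∈ c.support} = {x | x ∈ (c.rotate v hv).support} := by simp
  rw [hrotate, support_diff_singleton_of_isCycle (hc.rotate hv)]
  exact Walk.connected_induce_support _

end Inseparable

section Ear

/-- `e` is an ear of the vertex set `C`: a path that meets `C` exactly in its two ends and has at
least one inner vertex. Its ends are distinct because `Walk.IsPath` excludes closed paths of
positive length. -/
structure IsEar (C : Set V) (e : G.Walk u z) : Prop where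
  isPath : e.IsPath
  one_lt_length : 1 < e.length
  start_mem : u ∈ C
  end_mem : z ∈ C
  eq_or_eq : ∀ x ∈ e.support, x ∈ C → x = u ∨ x = z

theorem IsEar.ne {C : Set V} {e : G.Walk u z} (he : IsEar C e) : u ≠ z := by
  rintro rfl
  have hlength : e.length = 0 := Walk.length_eq_zero_iff.2 (Walk.isPath_iff_nil.1 he.isPath)
  exact absurd he.one_lt_length (by simp [hlength])

theorem start_notMem_tail_support_of_isPath {p : G.Walk u v} (hp : p.IsPath) :
    u ∉ p.support.tail := by
  have hnodup := hp.support_nodup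
  rw [← p.cons_tail_support, List.nodup_cons] at hnodup
  exact hnodup.1

theorem IsEar.isCycle_append {C : Set V} {e : G.Walk u z} (he : IsEar C e) {r : G.Walk z u}
    (hr : r.IsPath) (hrC : ∀ x ∈ r.support, x ∈ C) : (e.append r).IsCycle := by
  refine he.isPath.isCycle_append hr (fun x hxe hxr ↦ ?_) (.inl he.one_lt_length)
  rcases he.eq_or_eq x (List.mem_of_mem_tail hxe) (hrC x (List.mem_of_mem_tail hxr)) with rfl | rfl
  · exact start_notMem_tail_support_of_isPath he.isPath hxe
  · exact start_notMem_tail_support_of_isPath hr hxr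

theorem IsEar.exists_negative_isCycle_append {a : V} {c : G.Walk a a} {e : G.Walk u z}
    (he : IsEar {x | x ∈ c.support} e) (hc : c.IsCycle) (hneg : walkSign G σ c = -1) :
    ∃ r : G.Walk z u, (∀ x ∈ r.support, x ∈ c.support) ∧ (e.append r).IsCycle ∧
      walkSign G σ (e.append r) = -1 := by
  classical
  obtain ⟨p, q, hpq⟩ : ∃ (p : G.Walk u z) (q : G.Walk z u),
      c.rotate u he.start_mem = p.append q := by
    rw [← Walk.mem_support_iff_exists_append, Walk.mem_support_rotate_iff]
    exact he.end_mem
  have hcycle : (p.append q).IsCycle := hpq ▸ hc.rotate he.start_mem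
  have hp : p.IsPath := hcycle.isPath_of_append_left (Walk.not_nil_of_ne he.ne.symm)
  have hq : q.IsPath := hcycle.isPath_of_append_right (Walk.not_nil_of_ne he.ne)
  have hsupport (x : V) : x ∈ c.support ↔ x ∈ p.support ∨ x ∈ q.support := by
    rw [← Walk.mem_support_append_iff, ← hpq, Walk.mem_support_rotate_iff]
  have hp_support : ∀ x ∈ p.reverse.support, x ∈ c.support := fun x hx ↦
    (hsupport x).2 (.inl (by simpa using hx))
  have hq_support : ∀ x ∈ q.support, x ∈ c.support := fun x hx ↦ (hsupport x).2 (.inr hx)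
  have hpq_neg : walkSign G σ (p.append q) = -1 := by rw [← hpq, walkSign_rotate, hneg]
  rcases walkSign_append_eq_neg_one_or hpq_neg e with hneg' | hneg'
  · exact ⟨q, hq_support, he.isCycle_append hq hq_support, hneg'⟩
  · exact ⟨p.reverse, hp_support, he.isCycle_append hp.reverse hp_support, hneg'⟩

theorem exists_walk_of_reachable_induce {x y : S} (h : (G.induce S).Reachable x y) :
    ∃ p : G.Walk x y, ∀ t ∈ p.support, t ∈ S := by
  obtain ⟨p⟩ := h
  refine ⟨p.map (Embedding.induce S).toHom, fun t ht ↦ ?_⟩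
  obtain ⟨t', -, rfl⟩ := List.mem_map.1 (Walk.support_map _ p ▸ ht)
  exact t'.2

theorem exists_isPath_forall_mem_eq_end {C : Set V} (p : G.Walk u v) (hv : v ∈ C) :
    ∃ z ∈ C, ∃ q : G.Walk u z, q.IsPath ∧ q.support ⊆ p.support ∧
      ∀ x ∈ q.support, x ∈ C → x = z := by
  classical
  obtain ⟨z, hz, hzp, hfirst⟩ := p.bypass.exists_mem_support_forall_mem_support_imp_eq
    {x ∈ p.bypass.support.toFinset | x ∈ C} ⟨v, by simp [hv]⟩
  have hsub := p.bypass.support_takeUntil_subset_support hzp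
  refine ⟨z, (Finset.mem_filter.1 hz).2, p.bypass.takeUntil z hzp, p.bypass_isPath.takeUntil hzp,
    fun x hx ↦ p.support_bypass_subset_support (hsub hx), fun x hx hxC ↦ hfirst x ?_ hx⟩
  exact Finset.mem_filter.2 ⟨List.mem_toFinset.2 (hsub hx), hxC⟩

theorem exists_isEar_of_adj (hS : (G.induce (S \ {u})).Preconnected) (huv : G.Adj u v)
    (hv : v ∈ S) {C : Set V} (huC : u ∈ C) (hvC : v ∉ C) (hC : (C ∩ (S \ {u})).Nonempty) :
    ∃ (z : V) (e : G.Walk u z), IsEar C e ∧ v ∈ e.support ∧ ∀ x ∈ e.support, x = u ∨ x ∈ S := by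
  obtain ⟨t, htC, htS⟩ := hC
  obtain ⟨p, hpS⟩ := exists_walk_of_reachable_induce (hS ⟨v, hv, huv.ne'⟩ ⟨t, htS⟩)
  obtain ⟨z, hzC, q, hq, hqp, hqC⟩ := exists_isPath_forall_mem_eq_end p htC
  have hqS (x : V) (hx : x ∈ q.support) : x ∈ S \ {u} := hpS x (hqp hx)
  have hvz : v ≠ z := fun h ↦ hvC (h ▸ hzC)
  refine ⟨z, .cons huv q, ⟨hq.cons fun hu ↦ (hqS u hu).2 rfl, ?_, huC, hzC, ?_⟩, by simp, ?_⟩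
  · simpa using Walk.not_nil_iff_lt_length.1 (Walk.not_nil_of_ne hvz)
  · intro x hx hxC
    exact (List.mem_cons.1 hx).imp_right fun hxq ↦ hqC x hxq hxC
  · intro x hx
    exact (List.mem_cons.1 hx).imp_right fun hxq ↦ (hqS x hxq).1

end Ear

section NegativeCircle

/-- `v` lies on a negative circle of the signed graph induced on `S`. Such a circle is encoded as
a closed walk based at `v`. -/
def onNegativeCircle (G : SimpleGraph V) (σ : Sym2 V → ℤˣ) (S : Set V) (v : V) : Prop :=
  ∃ w : G.Walk v v, w.IsCycle ∧ (∀ x ∈ w.support, x ∈ S) ∧ walkSign G σ w = -1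

theorem onNegativeCircle_of_mem_support {w : G.Walk u u} (hw : w.IsCycle)
    (hwS : ∀ x ∈ w.support, x ∈ S) (hneg : walkSign G σ w = -1) (hv : v ∈ w.support) :
    onNegativeCircle G σ S v := by
  classical
  exact ⟨w.rotate v hv, hw.rotate hv, fun x hx ↦ hwS x ((w.mem_support_rotate_iff v hv).1 hx),
    (walkSign_rotate w hv).trans hneg⟩

theorem not_balancedOn_iff : ¬ balancedOn G σ S ↔ ∃ a, onNegativeCircle G σ S a := by
  have hsign (a : ℤˣ) : a ≠ 1 ↔ a = -1 := Int.units_ne_iff_eq_neg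
  simp only [balancedOn, onNegativeCircle, not_forall, exists_prop, ← hsign, ne_eq]

theorem onNegativeCircle.of_adj (hu : onNegativeCircle G σ S u) (hS : inseparableOn G S)
    (huv : G.Adj u v) (hv : v ∈ S) : onNegativeCircle G σ S v := by
  obtain ⟨c, hc, hcS, hneg⟩ := hu
  by_cases hvc : v ∈ c.support
  · exact onNegativeCircle_of_mem_support hc hcS hneg hvc
  have huS : u ∈ S := hcS u c.start_mem_support
  have hsnd : c.snd ∈ c.support := c.getVert_mem_support 1
  obtain ⟨z, e, he, hve, heS⟩ := exists_isEar_of_adj (C := {x | x ∈ c.support})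
    (hS.2 u huS).preconnected huv hv c.start_mem_support hvc
    ⟨c.snd, hsnd, hcS _ hsnd, (c.adj_snd hc.not_nil).ne'⟩
  obtain ⟨r, hrc, hcycle, hneg'⟩ := he.exists_negative_isCycle_append hc hneg
  refine onNegativeCircle_of_mem_support hcycle (fun x hx ↦ ?_) hneg'
    ((e.mem_support_append_iff r).2 (.inl hve))
  rcases (e.mem_support_append_iff r).1 hx with hxe | hxr
  · exact (heS x hxe).elim (· ▸ huS) id
  · exact hcS x (hrc x hxr)

theorem onNegativeCircle.of_inseparableOn (hu : onNegativeCircle G σ S u)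
    (hS : inseparableOn G S) (hv : v ∈ S) : onNegativeCircle G σ S v := by
  have huS : u ∈ S := let ⟨w, _, hwS, _⟩ := hu; hwS u w.start_mem_support
  suffices h : ∀ y : S, onNegativeCircle G σ S y from h ⟨v, hv⟩
  intro y
  have huy : Relation.ReflTransGen (G.induce S).Adj ⟨u, huS⟩ y :=
    (reachable_iff_reflTransGen _ _).1 (hS.1.preconnected _ _)
  induction huy with
  | refl => exact hu
  | @tail _ y _ hadj hx => exact hx.of_adj hS hadj y.2

end NegativeCircle

theorem vertex_in_negative_circle_iff_general (G : SimpleGraph V) (σ : Sym2 V → ℤˣ) (v : V) :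
    (∃ (a : V) (w : G.Walk a a), w.IsCycle ∧ v ∈ w.support ∧ walkSign G σ w = -1) ↔
      ∃ S : Set V, isBlock G S ∧ v ∈ S ∧ ¬ balancedOn G σ S := by
  constructor
  · rintro ⟨a, w, hw, hv, hneg⟩
    obtain ⟨B, hB, hwB⟩ := (inseparableOn_support_of_isCycle hw).exists_isBlock_superset
    exact ⟨B, hB, hwB hv, not_balancedOn_iff.2 ⟨a, w, hw, hwB, hneg⟩⟩
  · rintro ⟨S, hS, hv, hunbalanced⟩
    obtain ⟨a, ha⟩ := not_balancedOn_iff.1 hunbalanced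
    obtain ⟨w, hw, -, hneg⟩ := ha.of_inseparableOn hS.1 hv
    exact ⟨v, w, hw, w.start_mem_support, hneg⟩

end SignedGraph

/-- A vertex of a signed graph lies in a negative circle iff it belongs to an unbalanced
block. -/
theorem vertex_in_negative_circle_iff {V : Type*} [Fintype V]
    (G : SimpleGraph V) (σ : Sym2 V → ℤˣ) (v : V) :
    (∃ (a : V) (w : G.Walk a a), w.IsCycle ∧ v ∈ w.support ∧
        walkSign G σ w = -1) ↔
      ∃ S : Set V, isBlock G S ∧ v ∈ S ∧ ¬ balancedOn G σ S :=
  vertex_in_negative_circle_iff_general G σ v
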